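/- Let a, b, μ ∈ ℝ and let q ∈ ℍ be nonzero. Suppose μ • (q * k) = k * q, μ = normSq q, a • (q * i) − b • (q * j) = i * q, and b • (q * i) + a • (q * j) = j * q. Then μ = 1 and there exists θ ∈ ℝ such that q = ((Real.cos θ : ℝ) : ℍ) + (Real.sin θ) • k, a = Real.cos (2θ) and b = Real.sin (2θ). (This is the paper's computation of the r-fixing automorphisms of the AdS superalgebra osp(1|4): they form a circle, given by A the rotation by 2θ in the (B,P)-plane, μ = 1 and spinor part q = e^{θk}.) -/

import Mathlib

/-- The quaternion unit `i`. -/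
def quatI : Quaternion ℝ := ⟨0, 1, 0, 0⟩

/-- The quaternion unit `j`. -/
def quatJ : Quaternion ℝ := ⟨0, 0, 1, 0⟩

/-- The quaternion unit `k`. -/
def quatK : Quaternion ℝ := ⟨0, 0, 0, 1⟩

/-!
Comparing norms in `μ q k = k q` gives `|μ| = 1`, so `μ = |q|² > 0` forces `μ = 1`, and `q` is a
unit quaternion commuting with `k`, that is, `q = e^{θk}` for some `θ`. As `i` anticommutes with
`k`, we have `i e^{θk} = e^{-θk} i = e^{θk} (e^{-2θk} i) = e^{θk} (cos 2θ i - sin 2θ j)`, and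
cancelling `q` on the left of `q (a i - b j) = i q` yields `a` and `b`.
-/

open NormedSpace

theorem norm_eq_one_of_smul_mul_eq_mul_swap {𝕜 A : Type*} [NormedField 𝕜] [NormedDivisionRing A]
    [NormedAlgebra 𝕜 A] {r : 𝕜} {x y : A} (hx : x ≠ 0) (hy : y ≠ 0) (h : r • (x * y) = y * x) :
    ‖r‖ = 1 := by
  have hnorm : ‖r‖ * ‖x * y‖ = 1 * ‖x * y‖ := by
    rw [← norm_smul, h, norm_mul, norm_mul, one_mul, mul_comm]
  exact mul_right_cancel₀ (norm_ne_zero_iff.2 (mul_ne_zero hx hy)) hnorm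

theorem exists_cos_eq_and_sin_eq {x y : ℝ} (h : x ^ 2 + y ^ 2 = 1) :
    ∃ θ : ℝ, Real.cos θ = x ∧ Real.sin θ = y := by
  have hnorm : ‖(⟨x, y⟩ : ℂ)‖ = 1 := by
    rw [Complex.norm_eq_sqrt_sq_add_sq, h, Real.sqrt_one]
  obtain ⟨θ, hθ⟩ := (Complex.norm_eq_one_iff _).1 hnorm
  refine ⟨θ, ?_, ?_⟩
  · rw [← Complex.exp_ofReal_mul_I_re, hθ]
  · rw [← Complex.exp_ofReal_mul_I_im, hθ]

section PureUnit

variable {n : Quaternion ℝ}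

theorem exp_smul_of_re_eq_zero_of_norm_eq_one (hre : n.re = 0) (hnorm : ‖n‖ = 1) (θ : ℝ) :
    exp (θ • n) = (Real.cos θ : Quaternion ℝ) + Real.sin θ • n := by
  have hsin : Real.sin |θ| / |θ| * θ = Real.sin θ := by
    rcases eq_or_ne θ 0 with rfl | hθ
    · simp
    · rcases abs_choice θ with h | h <;> simp [h, hθ]
  rw [Quaternion.exp_of_re_eq_zero _ (by simp [hre]), norm_smul, hnorm, mul_one, Real.norm_eq_abs,
    Real.cos_abs, smul_smul, hsin]

theorem mul_exp_smul_of_semiconjBy_neg {v : Quaternion ℝ} (hre : n.re = 0) (hnorm : ‖n‖ = 1)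
    (hanti : SemiconjBy v n (-n)) (θ : ℝ) :
    v * exp (θ • n) =
      exp (θ • n) * (Real.cos (2 * θ) • v - Real.sin (2 * θ) • (n * v)) := by
  let +nondep : NormedAlgebra ℚ (Quaternion ℝ) := .restrictScalars ℚ ℝ _
  have hsplit : exp (θ • -n) = exp (θ • n) * exp (-(2 * θ) • n) := by
    rw [← exp_add_of_commute (((Commute.refl n).smul_left _).smul_right _)]
    congr 1
    module
  calc v * exp (θ • n) = exp (θ • -n) * v := (hanti.smul_right θ).exp_right
    _ = exp (θ • n) * (exp (-(2 * θ) • n) * v) := by rw [hsplit, mul_assoc]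
    _ = exp (θ • n) * (Real.cos (2 * θ) • v - Real.sin (2 * θ) • (n * v)) := by
      rw [exp_smul_of_re_eq_zero_of_norm_eq_one hre hnorm (-(2 * θ)), Real.cos_neg, Real.sin_neg,
        add_mul, Quaternion.coe_mul_eq_smul, neg_smul, neg_mul, smul_mul_assoc, sub_eq_add_neg]

end PureUnit

@[simp] theorem quatI_re : quatI.re = 0 := rfl
@[simp] theorem quatI_imI : quatI.imI = 1 := rfl
@[simp] theorem quatI_imJ : quatI.imJ = 0 := rfl
@[simp] theorem quatI_imK : quatI.imK = 0 := rfl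
@[simp] theorem quatJ_re : quatJ.re = 0 := rfl
@[simp] theorem quatJ_imI : quatJ.imI = 0 := rfl
@[simp] theorem quatJ_imJ : quatJ.imJ = 1 := rfl
@[simp] theorem quatJ_imK : quatJ.imK = 0 := rfl
@[simp] theorem quatK_re : quatK.re = 0 := rfl
@[simp] theorem quatK_imI : quatK.imI = 0 := rfl
@[simp] theorem quatK_imJ : quatK.imJ = 0 := rfl
@[simp] theorem quatK_imK : quatK.imK = 1 := rfl

theorem quatK_mul_quatI : quatK * quatI = quatJ := by
  ext <;> simp

theorem semiconjBy_quatI_quatK_neg_quatK : SemiconjBy quatI quatK (-quatK) := by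
  ext <;> simp

theorem norm_quatK : ‖quatK‖ = 1 := by
  have hsq : ‖quatK‖ ^ 2 = 1 := by
    rw [sq, ← Quaternion.normSq_eq_norm_mul_self, Quaternion.normSq_def']
    simp
  exact (pow_eq_one_iff_of_nonneg (norm_nonneg _) two_ne_zero).1 hsq

theorem smul_quatI_sub_smul_quatJ_inj {a b c d : ℝ} :
    a • quatI - b • quatJ = c • quatI - d • quatJ ↔ a = c ∧ b = d := by
  simp [Quaternion.ext_iff]

theorem exp_smul_quatK (θ : ℝ) :
    exp (θ • quatK) = (Real.cos θ : Quaternion ℝ) + Real.sin θ • quatK :=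
  exp_smul_of_re_eq_zero_of_norm_eq_one quatK_re norm_quatK θ

theorem quatI_mul_exp_smul_quatK (θ : ℝ) :
    quatI * exp (θ • quatK) =
      exp (θ • quatK) * (Real.cos (2 * θ) • quatI - Real.sin (2 * θ) • quatJ) := by
  rw [mul_exp_smul_of_semiconjBy_neg quatK_re norm_quatK semiconjBy_quatI_quatK_neg_quatK,
    quatK_mul_quatI]

theorem commute_quatK_iff {q : Quaternion ℝ} : Commute q quatK ↔ q.imI = 0 ∧ q.imJ = 0 := by
  have hcomp : Commute q quatK ↔ q.imJ = -q.imJ ∧ -q.imI = q.imI := by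
    simp [commute_iff_eq, Quaternion.ext_iff]
  rw [hcomp, self_eq_neg, neg_eq_self, and_comm]

theorem exists_exp_smul_quatK_eq {q : Quaternion ℝ} (hcomm : Commute q quatK)
    (hq : Quaternion.normSq q = 1) : ∃ θ : ℝ, exp (θ • quatK) = q := by
  obtain ⟨hI, hJ⟩ := commute_quatK_iff.1 hcomm
  have hcircle : q.re ^ 2 + q.imK ^ 2 = 1 := by
    simpa [Quaternion.normSq_def', hI, hJ] using hq
  obtain ⟨θ, hcos, hsin⟩ := exists_cos_eq_and_sin_eq hcircle
  refine ⟨θ, ?_⟩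
  rw [exp_smul_quatK, hcos, hsin]
  ext <;> simp [hI, hJ]

/-- The r-fixing automorphisms of the AdS superalgebra `osp(1|4)` form a circle:
the invariance conditions force `μ = 1`, `q = e^{θk}`, `a = cos 2θ` and
`b = sin 2θ`. -/
theorem stmt_19 (a b μ : ℝ) (q : Quaternion ℝ) (hq : q ≠ 0)
    (h₁ : μ • (q * quatK) = quatK * q)
    (h₂ : μ = Quaternion.normSq q)
    (h₃ : a • (q * quatI) - b • (q * quatJ) = quatI * q)
    (h₄ : b • (q * quatI) + a • (q * quatJ) = quatJ * q) :
    μ = 1 ∧ ∃ θ : ℝ,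
      q = ((Real.cos θ : ℝ) : Quaternion ℝ) + Real.sin θ • quatK ∧
      a = Real.cos (2 * θ) ∧ b = Real.sin (2 * θ) := by
  have hK : quatK ≠ 0 := norm_ne_zero_iff.1 (norm_quatK.trans_ne one_ne_zero)
  have hμ : μ = 1 := by
    have hμ_nonneg : 0 ≤ μ := h₂ ▸ Quaternion.normSq_nonneg
    rw [← Real.norm_of_nonneg hμ_nonneg]
    exact norm_eq_one_of_smul_mul_eq_mul_swap hq hK h₁
  have hcomm : Commute q quatK := by rwa [hμ, one_smul] at h₁
  obtain ⟨θ, rfl⟩ := exists_exp_smul_quatK_eq hcomm (h₂.symm.trans hμ)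
  refine ⟨hμ, θ, exp_smul_quatK θ, smul_quatI_sub_smul_quatJ_inj.1 (mul_left_cancel₀ hq ?_)⟩
  rw [mul_sub, mul_smul_comm, mul_smul_comm, h₃, quatI_mul_exp_smul_quatK]
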